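/- arXiv:1511.04821 — 3 statements merged into one kernel-verified Lean document; each statement's English description precedes it below -/
import Mathlib

section
/- Fix r, s ∈ 𝔬 and m ∈ ℤ. If ψ(t·r²) = ψ(t·s²) for all t ∈ ϖ^m𝔬, then r − s ∈ 2·ϖ^{-⌊m/2⌋}𝔬 or r + s ∈ 2·ϖ^{-⌊m/2⌋}𝔬, where ⌊m/2⌋ denotes the floor of m/2. -/
/-!
Triviality of `ψ` on `ϖ ^ m 𝔬 * (r ^ 2 - s ^ 2)` bounds the valuation of
`r ^ 2 - s ^ 2 = (r + s) * (r - s)` from below by `2 * e - m`, so one of the two factors has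
valuation at least half of that, rounded up because valuations are integers.
-/

/-- `ψ` has conductor `d` with respect to `v`: the elements `x` for which `ψ` is trivial on `𝔬 * x`,
where `𝔬` is the valuation ring of `v`, are exactly those of valuation at least `d`. It is stated
for bare functions `ψ`, so that it does not presuppose `ψ 0 = 1`. -/
def HasConductor {R M Γ : Type*} [Ring R] [One M] [LinearOrderedAddCommMonoidWithTop Γ]
    (v : AddValuation R Γ) (ψ : R → M) (d : Γ) : Prop :=
  ∀ x, (∀ t, 0 ≤ v t → ψ (t * x) = 1) ↔ d ≤ v x

namespace HasConductor

variable {R M Γ : Type*} [Ring R] [One M] [LinearOrderedAddCommMonoidWithTop Γ]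
  {v : AddValuation R Γ} {ψ : R → M} {d : Γ}

theorem map_zero_eq_one (hψ : HasConductor v ψ d) : ψ 0 = 1 := by
  simpa only [mul_zero] using (hψ 0).2 (by simp) 0 (by simp)

theorem le_add_of_forall_map_mul_eq_one (hψ : HasConductor v ψ d) {c x : R}
    (h : ∀ t, v c ≤ v t → ψ (t * x) = 1) : d ≤ v c + v x := by
  rw [← v.map_mul]
  refine (hψ (c * x)).1 fun t ht ↦ ?_
  have hct : v c ≤ v (t * c) := by
    rw [v.map_mul]
    exact le_add_of_nonneg_left ht
  rw [← mul_assoc]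
  exact h (t * c) hct

end HasConductor

theorem addChar_sub_eq_one_of_eq {A M : Type*} [AddGroup A] [Monoid M] (ψ : AddChar A M) {x y : A}
    (h : ψ x = ψ y) : ψ (x - y) = 1 := by
  rw [sub_eq_add_neg, ψ.map_add_eq_mul, h, ← ψ.map_add_eq_mul, add_neg_cancel, ψ.map_zero_eq_one]

theorem le_or_le_of_two_mul_sub_one_le_add {n : ℤ} {a b : WithTop ℤ}
    (h : ((2 * n - 1 : ℤ) : WithTop ℤ) ≤ a + b) : n ≤ a ∨ n ≤ b := by
  by_contra! hlt
  lift a to ℤ using hlt.1.ne_top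
  lift b to ℤ using hlt.2.ne_top
  norm_cast at h hlt
  omega

theorem boring_lemma_general {R M : Type*} [CommRing R] [Monoid M]
    (v : AddValuation R (WithTop ℤ)) (ψ : AddChar R M) {d : ℤ} (hψ : HasConductor v ψ d)
    {m : ℤ} {c : R} (hc : v c = m) {r s : R}
    (h : ∀ t, m ≤ v t → ψ (t * r ^ 2) = ψ (t * s ^ 2)) {n : ℤ} (hn : 2 * n - 1 ≤ d - m) :
    n ≤ v (r - s) ∨ n ≤ v (r + s) := by
  have hd : (d : WithTop ℤ) ≤ v c + v (r ^ 2 - s ^ 2) := by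
    refine hψ.le_add_of_forall_map_mul_eq_one fun t ht ↦ ?_
    rw [mul_sub]
    exact addChar_sub_eq_one_of_eq ψ (h t (hc ▸ ht))
  have hdm : ((d - m : ℤ) : WithTop ℤ) ≤ v (r - s) + v (r + s) := by
    rw [hc, sq_sub_sq, mul_comm, v.map_mul] at hd
    rwa [← WithTop.add_le_add_iff_left (WithTop.coe_ne_top (a := m)), ← WithTop.coe_add,
      add_sub_cancel]
  exact le_or_le_of_two_mul_sub_one_le_add ((WithTop.coe_le_coe.2 hn).trans hdm)

/-- Fix `r, s ∈ 𝔬` and `m ∈ ℤ`. If `ψ(t·r²) = ψ(t·s²)` for all `t ∈ ϖ^m𝔬`,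
then `r − s ∈ 2·ϖ^{-⌊m/2⌋}𝔬` or `r + s ∈ 2·ϖ^{-⌊m/2⌋}𝔬`. -/
theorem boring_lemma {k : Type*} [Field k]
    (hchar : (2 : k) ≠ 0)
    (v : AddValuation k (WithTop ℤ))
    (hsurj : ∀ m : ℤ, ∃ x : k, v x = (m : WithTop ℤ))
    (ϖ : k) (hϖ : v ϖ = (1 : ℤ))
    (e : ℤ) (he : v (2 : k) = (e : WithTop ℤ))
    (ψ : k → ℂ)
    (hψ_add : ∀ x y : k, ψ (x + y) = ψ x * ψ y)
    (hψ_ne : ∃ x : k, ψ x ≠ 1)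
    (hψ_cond : ∀ x : k,
      (∀ t : k, (0 : WithTop ℤ) ≤ v t → ψ (t * x) = 1) ↔ ((2 * e : ℤ) : WithTop ℤ) ≤ v x)
    (r s : k) (hr : (0 : WithTop ℤ) ≤ v r) (hs : (0 : WithTop ℤ) ≤ v s)
    (m : ℤ)
    (h : ∀ t : k, (m : WithTop ℤ) ≤ v t → ψ (t * r ^ 2) = ψ (t * s ^ 2)) :
    ((e - Int.fdiv m 2 : ℤ) : WithTop ℤ) ≤ v (r - s) ∨
      ((e - Int.fdiv m 2 : ℤ) : WithTop ℤ) ≤ v (r + s) := by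
  obtain ⟨c, hc⟩ := hsurj m
  let χ : AddChar k ℂ := ⟨ψ, HasConductor.map_zero_eq_one hψ_cond, hψ_add⟩
  have hn : 2 * (e - Int.fdiv m 2) - 1 ≤ 2 * e - m := by
    rw [Int.fdiv_eq_ediv_of_nonneg m zero_le_two]
    omega
  exact boring_lemma_general v χ hψ_cond hc h hn
end

section
/- Let m ≤ −1 be an integer and x, y ∈ kⁿ. If ψ(xᵀ a x) = ψ(yᵀ a y) for every symmetric n×n matrix a all of whose entries lie in ϖ^m𝔬, then x is congruent to y or to −y modulo 2ϖ𝔬ⁿ; that is, either xᵢ − yᵢ ∈ 2ϖ𝔬 for every index i, or xᵢ + yᵢ ∈ 2ϖ𝔬 for every index i. -/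
/-!
Since the admissible matrices are stable under scaling by `𝔬`, equality of the characters says that
`xᵀ a x - yᵀ a y` has valuation at least the conductor `d`. Put `p = x - y` and `q = x + y`, and let
`c` have valuation `m`. The matrices `c Eᵢᵢ` and `c (Eᵢⱼ + Eⱼᵢ)` show that `pᵢ qᵢ` and
`pᵢ qⱼ + qᵢ pⱼ` have valuation at least `d - m`, hence at least `2r - 1` as soon as
`m + 2r ≤ d + 1`. If `pᵢ` and `qⱼ` both had valuation below `r`, then `qᵢ` and `pⱼ` would have
valuation at least `r`, so `qᵢ pⱼ`, hence also `pᵢ qⱼ`, would have valuation at least `2r - 1`,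
a contradiction. The theorem is the case `d = 2e`, `r = e + 1`.
-/

theorem addChar_map_sub_eq_one {A M : Type*} [AddGroup A] [Monoid M] (ψ : AddChar A M) {a b : A}
    (hab : ψ a = ψ b) : ψ (a - b) = 1 := by
  rw [sub_eq_add_neg, ψ.map_add_eq_mul, hab, ← ψ.map_add_eq_mul, add_neg_cancel,
    ψ.map_zero_eq_one]

theorem toBilin'_matrixSingle_apply {R ι : Type*} [CommSemiring R] [Fintype ι] [DecidableEq ι]
    (i j : ι) (c : R) (x y : ι → R) :
    (Matrix.single i j c).toBilin' x y = x i * c * y j := by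
  rw [Matrix.toBilin'_apply', Matrix.single_mulVec, mul_assoc]
  exact dotProduct_single x (c * y j) i

theorem le_map_matrixSingle {R Γ ι : Type*} [Ring R] [LinearOrderedAddCommMonoidWithTop Γ]
    [DecidableEq ι] {v : AddValuation R Γ} {μ : Γ} {c : R} (hc : μ ≤ v c) (i j r s : ι) :
    μ ≤ v (Matrix.single i j c r s) := by
  rw [Matrix.single_apply]
  split_ifs <;> simp [hc]

section SymmFormsCongr

variable {R Γ ι : Type*} [CommRing R] [LinearOrderedAddCommMonoidWithTop Γ] [Fintype ι]
  [DecidableEq ι] {v : AddValuation R Γ} {μ δ : Γ} {x y : ι → R}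

/-- The vectors `x` and `y` are not separated by symmetric matrices with entries of valuation at
least `μ`, up to an error of valuation at least `δ`: for every such `a`, the values `xᵀ a x` and
`yᵀ a y` (encoded through `Matrix.toBilin'`) differ by an element of valuation at least `δ`. -/
def SymmFormsCongr (v : AddValuation R Γ) (μ δ : Γ) (x y : ι → R) : Prop :=
  ∀ a : Matrix ι ι R, a.IsSymm → (∀ i j, μ ≤ v (a i j)) →
    δ ≤ v (a.toBilin' x x - a.toBilin' y y)

theorem symmFormsCongr_of_addChar {M : Type*} [Monoid M] {ψ : AddChar R M}
    (hψ : ∀ z, (∀ t, 0 ≤ v t → ψ (t * z) = 1) → δ ≤ v z)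
    (h : ∀ a : Matrix ι ι R, a.IsSymm → (∀ i j, μ ≤ v (a i j)) →
      ψ (a.toBilin' x x) = ψ (a.toBilin' y y)) :
    SymmFormsCongr v μ δ x y := by
  intro a ha hμ
  refine hψ _ fun t ht => ?_
  have hμ_smul (i j : ι) : μ ≤ v ((t • a) i j) := by
    rw [Matrix.smul_apply, smul_eq_mul, v.map_mul]
    exact le_add_of_nonneg_of_le ht (hμ i j)
  simpa [mul_sub] using addChar_map_sub_eq_one ψ (h (t • a) (ha.smul t) hμ_smul)

namespace SymmFormsCongr

theorem le_map_mul_sub_mul_add (h : SymmFormsCongr v μ δ x y) {c : R} (hc : μ ≤ v c) (i : ι) :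
    δ ≤ v (c * ((x i - y i) * (x i + y i))) := by
  have hform := h (Matrix.single i i c) (Matrix.transpose_single i i c)
    (le_map_matrixSingle hc i i)
  rw [toBilin'_matrixSingle_apply, toBilin'_matrixSingle_apply] at hform
  convert hform using 2
  ring

theorem le_map_mul_sub_mul_add_add_add_mul_sub (h : SymmFormsCongr v μ δ x y) {c : R}
    (hc : μ ≤ v c) (i j : ι) :
    δ ≤ v (c * ((x i - y i) * (x j + y j) + (x i + y i) * (x j - y j))) := by
  have hform := h (Matrix.single i j c + (Matrix.single i j c).transpose)
    (Matrix.isSymm_add_transpose_self _)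
    fun r s => v.map_le_add (le_map_matrixSingle hc i j r s) (le_map_matrixSingle hc i j s r)
  simp only [Matrix.transpose_single, map_add, LinearMap.add_apply,
    toBilin'_matrixSingle_apply] at hform
  convert hform using 2
  ring

end SymmFormsCongr

end SymmFormsCongr

section IntegerValued

variable {R : Type*} [Ring R] {v : AddValuation R (WithTop ℤ)} {r : ℤ}

theorem le_map_of_le_map_mul {c z : R} {m s d : ℤ} (hc : v c = m) (hs : m + s ≤ d)
    (hd : (d : WithTop ℤ) ≤ v (c * z)) : (s : WithTop ℤ) ≤ v z := by
  rw [v.map_mul, hc] at hd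
  have hms : (m : WithTop ℤ) + s ≤ m + v z := le_trans (mod_cast hs) hd
  exact (WithTop.add_le_add_iff_left WithTop.coe_ne_top).1 hms

theorem le_map_or_le_map_of_le_map_mul {a b : R}
    (hab : ((2 * r - 1 : ℤ) : WithTop ℤ) ≤ v (a * b)) :
    (r : WithTop ℤ) ≤ v a ∨ (r : WithTop ℤ) ≤ v b := by
  rw [v.map_mul] at hab
  generalize v a = α at *
  generalize v b = β at *
  induction α using WithTop.recTopCoe with
  | top => exact Or.inl le_top
  | coe α =>
    induction β using WithTop.recTopCoe with
    | top => exact Or.inr le_top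
    | coe β =>
      norm_cast at hab ⊢
      omega

theorem le_map_mul_of_le_map {a b : R} (ha : (r : WithTop ℤ) ≤ v a)
    (hb : (r : WithTop ℤ) ≤ v b) : ((2 * r - 1 : ℤ) : WithTop ℤ) ≤ v (a * b) := by
  rw [v.map_mul]
  refine le_trans ?_ (add_le_add ha hb)
  norm_cast
  omega

theorem forall_le_map_or_forall_le_map {ι : Type*} {p q : ι → R}
    (hdiag : ∀ i, ((2 * r - 1 : ℤ) : WithTop ℤ) ≤ v (p i * q i))
    (hcross : ∀ i j, ((2 * r - 1 : ℤ) : WithTop ℤ) ≤ v (p i * q j + q i * p j)) :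
    (∀ i, (r : WithTop ℤ) ≤ v (p i)) ∨ ∀ i, (r : WithTop ℤ) ≤ v (q i) := by
  by_contra hcon
  rw [not_or, not_forall, not_forall] at hcon
  obtain ⟨⟨i, hpi⟩, j, hqj⟩ := hcon
  have hqi := (le_map_or_le_map_of_le_map_mul (hdiag i)).resolve_left hpi
  have hpj := (le_map_or_le_map_of_le_map_mul (hdiag j)).resolve_right hqj
  have hpq : ((2 * r - 1 : ℤ) : WithTop ℤ) ≤ v (p i * q j) := by
    simpa only [add_sub_cancel_right] using
      v.map_le_sub (hcross i j) (le_map_mul_of_le_map hqi hpj)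
  exact (le_map_or_le_map_of_le_map_mul hpq).elim hpi hqj

end IntegerValued

theorem SymmFormsCongr.forall_le_map_sub_or_forall_le_map_add {R ι : Type*} [CommRing R]
    [Fintype ι] [DecidableEq ι] {v : AddValuation R (WithTop ℤ)} {m d r : ℤ} {x y : ι → R}
    (h : SymmFormsCongr v m d x y) {c : R} (hc : v c = m) (hr : m + 2 * r ≤ d + 1) :
    (∀ i, (r : WithTop ℤ) ≤ v (x i - y i)) ∨ ∀ i, (r : WithTop ℤ) ≤ v (x i + y i) := by
  have hs : m + (2 * r - 1) ≤ d := by omega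
  exact forall_le_map_or_forall_le_map
    (fun i => le_map_of_le_map_mul hc hs (h.le_map_mul_sub_mul_add hc.ge i))
    (fun i j => le_map_of_le_map_mul hc hs (h.le_map_mul_sub_mul_add_add_add_mul_sub hc.ge i j))

theorem characters_of_sym_odd_general {R M ι : Type*} [CommRing R] [Monoid M] [Fintype ι]
    (v : AddValuation R (WithTop ℤ)) {ψ : AddChar R M} {d m r : ℤ}
    (hψ : ∀ z, (∀ t, 0 ≤ v t → ψ (t * z) = 1) → (d : WithTop ℤ) ≤ v z)
    {c : R} (hc : v c = m) (hr : m + 2 * r ≤ d + 1) {x y : ι → R}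
    (h : ∀ a : Matrix ι ι R, a.IsSymm → (∀ i j, (m : WithTop ℤ) ≤ v (a i j)) →
      ψ (∑ i, ∑ j, x i * a i j * x j) = ψ (∑ i, ∑ j, y i * a i j * y j)) :
    (∀ i, (r : WithTop ℤ) ≤ v (x i - y i)) ∨ ∀ i, (r : WithTop ℤ) ≤ v (x i + y i) := by
  classical
  have hcongr : SymmFormsCongr v m d x y :=
    symmFormsCongr_of_addChar hψ (by simpa only [Matrix.toBilin'_apply] using h)
  exact hcongr.forall_le_map_sub_or_forall_le_map_add hc hr

/-- Let `m ≤ −1` and `x, y ∈ kⁿ`. If `ψ(xᵀ a x) = ψ(yᵀ a y)` for every symmetric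
`n×n` matrix `a` with entries in `ϖ^m𝔬`, then `x ≡ y` or `x ≡ −y` modulo `2ϖ𝔬ⁿ`. -/
theorem characters_of_sym_odd {k : Type*} [Field k]
    (hchar : (2 : k) ≠ 0)
    (v : AddValuation k (WithTop ℤ))
    (hsurj : ∀ m : ℤ, ∃ x : k, v x = (m : WithTop ℤ))
    (ϖ : k) (hϖ : v ϖ = (1 : ℤ))
    (e : ℤ) (he : v (2 : k) = (e : WithTop ℤ))
    (ψ : k → ℂ)
    (hψ_add : ∀ x y : k, ψ (x + y) = ψ x * ψ y)
    (hψ_ne : ∃ x : k, ψ x ≠ 1)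
    (hψ_cond : ∀ x : k,
      (∀ t : k, (0 : WithTop ℤ) ≤ v t → ψ (t * x) = 1) ↔ ((2 * e : ℤ) : WithTop ℤ) ≤ v x)
    (n : ℕ) (m : ℤ) (hm : m ≤ -1) (x y : Fin n → k)
    (h : ∀ a : Matrix (Fin n) (Fin n) k, a.IsSymm →
      (∀ i j, (m : WithTop ℤ) ≤ v (a i j)) →
      ψ (∑ i, ∑ j, x i * a i j * x j) = ψ (∑ i, ∑ j, y i * a i j * y j)) :
    (∀ i, ((e + 1 : ℤ) : WithTop ℤ) ≤ v (x i - y i)) ∨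
      (∀ i, ((e + 1 : ℤ) : WithTop ℤ) ≤ v (x i + y i)) := by
  obtain ⟨c, hc⟩ := hsurj m
  have hψ_zero : ψ 0 = 1 := by simpa using (hψ_cond 0).2 (by simp) 0 (by simp)
  exact characters_of_sym_odd_general v (ψ := ⟨ψ, hψ_zero, hψ_add⟩) (fun z => (hψ_cond z).1) hc
    (by omega) h
end

section
/- Let r, s ∈ ℤ with r ≤ s, and let Q denote the finite quotient 𝔬-module ϖ^r𝔬ⁿ / 2ϖ^s𝔬ⁿ. Then the ℂ-vector space of even functions {f : Q → ℂ : f(−x) = f(x) for all x ∈ Q} has dimension (1/2)·q^{en}·(q^{(s−r)n} + 1). -/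
/-- The fractional ideal `ϖ^m𝔬 = {x ∈ k : val(x) ≥ m}`, as an additive subgroup of `k`. -/
def valAddSubgroup {k : Type*} [Field k] (v : AddValuation k (WithTop ℤ)) (m : ℤ) :
    AddSubgroup k where
  carrier := {x : k | (m : WithTop ℤ) ≤ v x}
  zero_mem' := by simp [v.map_zero]
  add_mem' := by
    intro a b ha hb
    exact le_trans (le_min ha hb) (v.map_add a b)
  neg_mem' := by
    intro a ha
    simpa [v.map_neg] using ha

/-- The lattice `ϖ^m𝔬ⁿ` inside `kⁿ`. -/
def valLattice {k : Type*} [Field k] (v : AddValuation k (WithTop ℤ)) (n : ℕ) (m : ℤ) :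
    AddSubgroup (Fin n → k) :=
  AddSubgroup.pi Set.univ fun _ => valAddSubgroup v m

/-- The even complex-valued functions on an additive group `Q`, as a `ℂ`-subspace of
`Q → ℂ`. -/
noncomputable def evenFns (Q : Type*) [AddCommGroup Q] : Submodule ℂ (Q → ℂ) where
  carrier := {f : Q → ℂ | ∀ x : Q, f (-x) = f x}
  zero_mem' := fun _ => rfl
  add_mem' := by
    intro f g hf hg x
    simp [hf x, hg x]
  smul_mem' := by
    intro c f hf x
    simp [hf x]

/-!
Averaging over `x ↦ -x` projects `Q → ℂ` onto the even functions, so twice their dimension is the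
trace of `1 + (x ↦ -x)`, that is `#Q` plus the number of fixed points of negation on `Q`. Since
`val(2) = e`, doubling carries `ϖ^s𝔬ⁿ` onto `2ϖ^s𝔬ⁿ = ϖ^(e+s)𝔬ⁿ`; as `ϖ^s𝔬ⁿ ⊆ ϖ^r𝔬ⁿ`, the
fixed points form the subgroup `ϖ^s𝔬ⁿ / 2ϖ^s𝔬ⁿ`. Filtering by powers of `ϖ`, whose successive
quotients all have `q` elements, gives the cardinalities `q^((e+s-r)n)` and `q^(en)`.
-/

section Trace

theorem two_mul_finrank_eqLocus_id_of_involutive {K V : Type*} [Field K] [NeZero (2 : K)]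
    [AddCommGroup V] [Module K V] [FiniteDimensional K V] (T : V →ₗ[K] V)
    (hT : Function.Involutive T) :
    2 * (Module.finrank K (LinearMap.eqLocus T LinearMap.id) : K) =
      Module.finrank K V + LinearMap.trace K V T := by
  have two_ne : (2 : K) ≠ 0 := NeZero.ne 2
  have average_isProj :
      LinearMap.IsProj (LinearMap.eqLocus T LinearMap.id)
        ((2⁻¹ : K) • (LinearMap.id + T)) := by
    refine ⟨fun x => ?_, fun x hx => ?_⟩
    · simp [LinearMap.mem_eqLocus, hT x, add_comm]
    · replace hx : T x = x := hx
      rw [LinearMap.smul_apply, LinearMap.add_apply, LinearMap.id_apply, hx, ← two_smul K x,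
        inv_smul_smul₀ two_ne]
  rw [← average_isProj.trace, map_smul, map_add, LinearMap.trace_id, smul_eq_mul,
    mul_inv_cancel_left₀ two_ne]

theorem trace_funLeft (R : Type*) [CommRing R] {ι : Type*} [Finite ι] (σ : ι → ι) :
    LinearMap.trace R (ι → R) (LinearMap.funLeft R R σ) =
      Nat.card (Function.fixedPoints σ) := by
  classical
  have := Fintype.ofFinite ι
  simp only [LinearMap.trace_eq_matrix_trace R (Pi.basisFun R ι), Matrix.trace, Matrix.diag,
    LinearMap.toMatrix_apply, LinearMap.funLeft_apply, Pi.basisFun_apply, Pi.basisFun_repr,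
    Pi.single_apply, Finset.sum_boole, Nat.card_eq_fintype_card, Fintype.card_subtype,
    Function.mem_fixedPoints, Function.IsFixedPt]

theorem evenFns_eq_eqLocus (Q : Type*) [AddCommGroup Q] :
    evenFns Q = LinearMap.eqLocus (LinearMap.funLeft ℂ ℂ Neg.neg) LinearMap.id := by
  ext f
  exact funext_iff.symm

theorem two_mul_finrank_evenFns (Q : Type*) [AddCommGroup Q] [Finite Q] :
    2 * Module.finrank ℂ (evenFns Q) =
      Nat.card Q + Nat.card (Function.fixedPoints (Neg.neg : Q → Q)) := by
  have := Fintype.ofFinite Q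
  have neg_involutive : Function.Involutive (LinearMap.funLeft ℂ ℂ (Neg.neg : Q → Q)) :=
    fun f => funext fun x => by simp only [LinearMap.funLeft_apply, neg_neg]
  have h := two_mul_finrank_eqLocus_id_of_involutive _ neg_involutive
  rw [trace_funLeft, ← evenFns_eq_eqLocus, Module.finrank_fintype_fun_eq_card,
    ← Nat.card_eq_fintype_card] at h
  exact_mod_cast h

end Trace

section Index

theorem card_fixedPoints_neg_quotient {A : Type*} [AddCommGroup A] (B : AddSubgroup A) :
    Nat.card (Function.fixedPoints (Neg.neg : A ⧸ B → A ⧸ B)) =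
      B.relIndex (B.comap (nsmulAddMonoidHom 2)) := by
  have fixedPoints_eq : Function.fixedPoints (Neg.neg : A ⧸ B → A ⧸ B) =
      (B.comap (nsmulAddMonoidHom 2)).map (QuotientAddGroup.mk' B) := by
    have le_comap : B ≤ B.comap (nsmulAddMonoidHom 2) := fun _ hx => B.nsmul_mem hx 2
    ext x
    induction x using QuotientAddGroup.induction_on with
    | H x =>
      rw [Function.mem_fixedPoints, Function.IsFixedPt, ← QuotientAddGroup.mk_neg,
        QuotientAddGroup.eq, neg_neg, ← two_nsmul, SetLike.mem_coe,
        ← QuotientAddGroup.mk'_apply, ← AddSubgroup.mem_comap, AddSubgroup.comap_map_eq,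
        QuotientAddGroup.ker_mk', sup_of_le_left le_comap]
      rfl
  have card_map := AddSubgroup.relIndex_ker (B.comap (nsmulAddMonoidHom 2)) (QuotientAddGroup.mk' B)
  rw [QuotientAddGroup.ker_mk'] at card_map
  rw [fixedPoints_eq, card_map]
  rfl

theorem relIndex_pi_const (ι : Type*) [Fintype ι] {G : Type*} [AddGroup G]
    (H K : AddSubgroup G) :
    (AddSubgroup.pi Set.univ fun _ : ι => H).relIndex (AddSubgroup.pi Set.univ fun _ : ι => K) =
      H.relIndex K ^ Fintype.card ι := by
  have range_eq : (K.subtype.compLeft ι).range = AddSubgroup.pi Set.univ fun _ => K := by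
    ext x
    simp only [AddMonoidHom.mem_range, AddSubgroup.mem_pi]
    exact ⟨fun ⟨y, hy⟩ i _ => hy ▸ (y i).2, fun h => ⟨fun i => ⟨x i, h i trivial⟩, rfl⟩⟩
  have comap_eq : (AddSubgroup.pi Set.univ fun _ => H).comap (K.subtype.compLeft ι) =
      AddSubgroup.pi Set.univ fun _ => H.addSubgroupOf K := rfl
  rw [← range_eq, ← AddSubgroup.index_comap, comap_eq, AddSubgroup.index_pi, Finset.prod_const,
    Finset.card_univ, AddSubgroup.relIndex]

end Index

section Valuation

variable {k : Type*} [Field k] {v : AddValuation k (WithTop ℤ)}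

theorem nonneg_of_map_two_eq {e : ℤ} (he : v 2 = (e : WithTop ℤ)) : 0 ≤ e := by
  have h := v.map_add 1 1
  rw [v.map_one, min_self, one_add_one_eq_two, he] at h
  exact_mod_cast h

theorem valAddSubgroup_antitone : Antitone (valAddSubgroup v) :=
  fun _ _ hab _ hx => (WithTop.coe_le_coe.2 hab).trans hx

theorem valLattice_antitone (n : ℕ) : Antitone (valLattice v n) :=
  fun _ _ hab _ hx i hi => valAddSubgroup_antitone hab (hx i hi)

theorem mul_mem_valAddSubgroup_add_iff {m : ℤ} {t : k} (ht : v t = (m : WithTop ℤ)) (j : ℤ)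
    (x : k) : t * x ∈ valAddSubgroup v (m + j) ↔ x ∈ valAddSubgroup v j := by
  change ((m + j : ℤ) : WithTop ℤ) ≤ v (t * x) ↔ (j : WithTop ℤ) ≤ v x
  rw [v.map_mul, ht, WithTop.coe_add, WithTop.add_le_add_iff_left WithTop.coe_ne_top]

theorem smul_mem_valLattice_add_iff {m : ℤ} {t : k} (ht : v t = (m : WithTop ℤ)) {n : ℕ} (j : ℤ)
    (x : Fin n → k) : t • x ∈ valLattice v n (m + j) ↔ x ∈ valLattice v n j := by
  simp only [valLattice, AddSubgroup.mem_pi, Pi.smul_apply, smul_eq_mul,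
    mul_mem_valAddSubgroup_add_iff ht]

theorem map_mulLeft_valAddSubgroup {m : ℤ} {t : k} (ht : v t = (m : WithTop ℤ)) (ht₀ : t ≠ 0)
    (j : ℤ) : (valAddSubgroup v j).map (AddMonoidHom.mulLeft t) = valAddSubgroup v (m + j) := by
  ext y
  obtain ⟨x, rfl⟩ := mul_left_surjective₀ ht₀ y
  rw [mul_mem_valAddSubgroup_add_iff ht]
  exact AddSubgroup.mem_map_iff_mem (mul_right_injective₀ ht₀)

theorem relIndex_valAddSubgroup_add_left {m : ℤ} {t : k} (ht : v t = (m : WithTop ℤ))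
    (a b : ℤ) :
    (valAddSubgroup v (m + b)).relIndex (valAddSubgroup v (m + a)) =
      (valAddSubgroup v b).relIndex (valAddSubgroup v a) := by
  have ht₀ : t ≠ 0 := v.ne_top_iff.1 (ht ▸ WithTop.coe_ne_top)
  rw [← map_mulLeft_valAddSubgroup ht ht₀, ← map_mulLeft_valAddSubgroup ht ht₀]
  exact AddSubgroup.relIndex_map_map_of_injective _ _ (mul_right_injective₀ ht₀)

theorem relIndex_valAddSubgroup_add_natCast
    (hsurj : ∀ m : ℤ, ∃ x : k, v x = (m : WithTop ℤ)) (a : ℤ) (d : ℕ) :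
    (valAddSubgroup v (a + d)).relIndex (valAddSubgroup v a) =
      (valAddSubgroup v 1).relIndex (valAddSubgroup v 0) ^ d := by
  induction d with
  | zero => simp
  | succ d ih =>
    obtain ⟨t, ht⟩ := hsurj (a + d)
    have step := relIndex_valAddSubgroup_add_left ht 0 1
    rw [add_zero] at step
    rw [Nat.cast_succ, ← add_assoc,
      ← AddSubgroup.relIndex_mul_relIndex _ (valAddSubgroup v (a + d)) _
        (valAddSubgroup_antitone (by lia)) (valAddSubgroup_antitone (by lia)),
      step, ih, pow_succ']

theorem relIndex_valLattice (hsurj : ∀ m : ℤ, ∃ x : k, v x = (m : WithTop ℤ)) (n : ℕ)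
    {a b : ℤ} (hab : a ≤ b) :
    (valLattice v n b).relIndex (valLattice v n a) =
      (valAddSubgroup v 1).relIndex (valAddSubgroup v 0) ^ ((b - a) * n).toNat := by
  obtain ⟨d, rfl⟩ := Int.le.dest hab
  rw [valLattice, valLattice, relIndex_pi_const, relIndex_valAddSubgroup_add_natCast hsurj,
    Fintype.card_fin, ← pow_mul, add_sub_cancel_left, ← Nat.cast_mul, Int.toNat_natCast]

theorem card_fixedPoints_neg_valLattice_quotient {e : ℤ} (he : v 2 = (e : WithTop ℤ)) (n : ℕ)
    {r s : ℤ} (hrs : r ≤ s) :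
    Nat.card (Function.fixedPoints (Neg.neg :
      valLattice v n r ⧸ (valLattice v n (e + s)).addSubgroupOf (valLattice v n r) → _)) =
      (valLattice v n (e + s)).relIndex (valLattice v n s) := by
  have comap_two_nsmul :
      ((valLattice v n (e + s)).addSubgroupOf (valLattice v n r)).comap (nsmulAddMonoidHom 2) =
        (valLattice v n s).addSubgroupOf (valLattice v n r) := by
    ext x
    have h := smul_mem_valLattice_add_iff he s (x : Fin n → k)
    rwa [ofNat_smul_eq_nsmul] at h
  rw [card_fixedPoints_neg_quotient, comap_two_nsmul,
    AddSubgroup.relIndex_addSubgroupOf (valLattice_antitone n hrs)]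

end Valuation

/-- For `r ≤ s`, the space of even functions on `Q = ϖ^r𝔬ⁿ / 2ϖ^s𝔬ⁿ` has
dimension `(1/2)·q^{en}·(q^{(s−r)n} + 1)` (stated with both sides multiplied by 2). -/
theorem dim_even_functions {k : Type*} [Field k]
    (hchar : (2 : k) ≠ 0)
    (v : AddValuation k (WithTop ℤ))
    (hsurj : ∀ m : ℤ, ∃ x : k, v x = (m : WithTop ℤ))
    (ϖ : k) (hϖ : v ϖ = (1 : ℤ))
    (e : ℤ) (he : v (2 : k) = (e : WithTop ℤ))
    (q : ℕ)
    (hres_fin : Finite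
      (valAddSubgroup v 0 ⧸ (valAddSubgroup v 1).addSubgroupOf (valAddSubgroup v 0)))
    (hq : Nat.card
      (valAddSubgroup v 0 ⧸ (valAddSubgroup v 1).addSubgroupOf (valAddSubgroup v 0)) = q)
    (n : ℕ) (r s : ℤ) (hrs : r ≤ s) :
    2 * Module.finrank ℂ
        (evenFns
          (valLattice v n r ⧸ (valLattice v n (e + s)).addSubgroupOf (valLattice v n r))) =
      q ^ (e * n).toNat * (q ^ ((s - r) * n).toNat + 1) := by
  have he₀ : 0 ≤ e := nonneg_of_map_two_eq he
  have residue_card : (valAddSubgroup v 1).relIndex (valAddSubgroup v 0) = q := hq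
  have q_ne_zero : q ≠ 0 := hq ▸ Nat.card_pos.ne'
  have card_quotient :
      Nat.card (valLattice v n r ⧸ (valLattice v n (e + s)).addSubgroupOf (valLattice v n r)) =
        q ^ (e * n).toNat * q ^ ((s - r) * n).toNat := by
    rw [← pow_add, ← Int.toNat_add (by positivity) (mul_nonneg (sub_nonneg.2 hrs) n.cast_nonneg),
      ← add_mul, ← add_sub_assoc, ← residue_card]
    exact relIndex_valLattice hsurj n (by lia)
  have : Finite (valLattice v n r ⧸ (valLattice v n (e + s)).addSubgroupOf (valLattice v n r)) :=
    Nat.finite_of_card_ne_zero (by rw [card_quotient]; positivity)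
  rw [two_mul_finrank_evenFns, card_quotient, card_fixedPoints_neg_valLattice_quotient he n hrs,
    relIndex_valLattice hsurj n (by lia), residue_card, add_sub_cancel_right, mul_add_one]
end
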